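/- Let H be a tree-degenerate bipartite graph with block representation (B_0, B_1, ..., B_m, P), let s = |B_0|. Then there exists a constant c_1 > 0 depending only on H such that for every graph G, t_H(G) ≥ c_1 · p_s(G)^{e(H)} ≥ c_1 · t_{K_2}(G)^{e(H)}. -/

import Mathlib

/-- A block representation `(B₀, B₁, …, B_m, P)` of a tree-degenerate bipartite graph
`H`: the blocks `B i` are nonempty and partition `V(H)`; `B₁` is completely joined to
its parent set `P 1 = B₀`; for each `2 ≤ i ≤ m`, the block `B i` is completely joined
to its parent set `P i`, a subset of an earlier block `B (γ i)` with `1 ≤ γ i < i` and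
`|P (γ i)| ≤ |P i|`; and these joins account for all edges of `H`. -/
structure BlockRep {VH : Type} [Fintype VH] [DecidableEq VH]
    (H : SimpleGraph VH) (m : ℕ) where
  hm : 1 ≤ m
  B : Fin (m + 1) → Finset VH
  P : Fin (m + 1) → Finset VH
  γ : Fin (m + 1) → Fin (m + 1)
  B_nonempty : ∀ i, (B i).Nonempty
  partition : ∀ v : VH, ∃! i, v ∈ B i
  P_one : P 1 = B 0
  γ_lt : ∀ i : Fin (m + 1), 2 ≤ (i : ℕ) → 1 ≤ ((γ i : ℕ)) ∧ (γ i : ℕ) < (i : ℕ)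
  P_subset : ∀ i : Fin (m + 1), 2 ≤ (i : ℕ) → P i ⊆ B (γ i)
  P_card_mono : ∀ i : Fin (m + 1), 2 ≤ (i : ℕ) → (P (γ i)).card ≤ (P i).card
  adj_iff : ∀ u v : VH, H.Adj u v ↔
    ∃ i : Fin (m + 1), 1 ≤ (i : ℕ) ∧
      ((u ∈ P i ∧ v ∈ B i) ∨ (v ∈ P i ∧ u ∈ B i))

/-- The `r`-norm density `p_r(G) := ((∑_v d(v)^r)/n^{r+1})^{1/r}`. -/
noncomputable def rnormDensity {V : Type} [Fintype V] (G : SimpleGraph V)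
    [DecidableRel G.Adj] (r : ℕ) : ℝ :=
  ((∑ v : V, (G.degree v : ℝ) ^ r) / (Fintype.card V : ℝ) ^ (r + 1)) ^ ((r : ℝ)⁻¹)

/-- The homomorphism density `t_H(G) = h_H(G)/|V(G)|^{|V(H)|}`. -/
noncomputable def homDensity {α β : Type} [Fintype α] [Fintype β]
    (H : SimpleGraph α) (G : SimpleGraph β) : ℝ :=
  (Nat.card (H →g G) : ℝ) / (Fintype.card β : ℝ) ^ (Fintype.card α)

/-- The edge density `t_{K_2}(G) = 2e(G)/n²`. -/
noncomputable def edgeDensity' {β : Type} [Fintype β] (G : SimpleGraph β) : ℝ :=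
  2 * (Nat.card G.edgeSet : ℝ) / (Fintype.card β : ℝ) ^ 2

/-!
Everything is done for nonnegative weights `A` on the edges of the target graph, where homogeneity
allows the normalization `p_s(A) = 1`. Call a placement `f` of `P i` *poor* if the density of its
extensions to `B i` and the blocks below is small compared with `μ ^ |B i|`, where `μ` is the
codegree of `f`. By induction from the leaves of the tree of blocks to the root, the poor placements
carry an arbitrarily small part of the `r`-th moment of `μ`, for all `1 ≤ r ≤ |P i|`. Indeed, if `f`
is poor and `μ` is not too small, a union bound shows that for some child `k` of `i` the placements
of `P k` that are poor and joined to `f` have large density compared with `μ ^ |P k|`. On average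
over `f`, by double counting, the density of these placements is the contribution of the poor
placements of `P k` to the `|P i|`-th moment of the codegree, which is small by induction because
`|P i| ≤ |P k|`.

At the root, `𝔼 μ = p_s(A) ^ s = 1`. The placements of `B₀` that are not poor account for half of
this mean, and Jensen's inequality for `x ↦ x ^ |B₁|` bounds the density of their extensions below.
-/

open Finset
open scoped BigOperators

section Expectation

variable {ι α K : Type*} [Fintype ι] [DecidableEq ι] [Fintype α] [Nonempty α]

lemma expect_expect_piecewise {M : Type*} [AddCommMonoid M] [Module ℚ≥0 M] (C : Finset ι)
    (g : (ι → α) → M) : 𝔼 f, 𝔼 x, g (C.piecewise x f) = 𝔼 f, g f := by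
  have swap_involutive : Function.Involutive fun q : (ι → α) × (ι → α) =>
      (C.piecewise q.2 q.1, C.piecewise q.1 q.2) := by
    intro q
    ext v <;> by_cases hv : v ∈ C <;> simp [hv]
  calc 𝔼 f, 𝔼 x, g (C.piecewise x f)
      = 𝔼 q : (ι → α) × (ι → α), g (C.piecewise q.2 q.1) := by
        rw [← expect_product', univ_product_univ]
    _ = 𝔼 q : (ι → α) × (ι → α), g q.1 :=
        Fintype.expect_equiv swap_involutive.toPerm _ _ fun _ => rfl
    _ = 𝔼 f, 𝔼 _x : ι → α, g f := by
        rw [← expect_product', univ_product_univ]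
    _ = 𝔼 f, g f := by simp only [Fintype.expect_const]

lemma expect_mul_of_dependsOn [Semifield K] [CharZero K] {C : Finset ι} {g h : (ι → α) → K}
    (hg : DependsOn g C) (hh : DependsOn h (↑C)ᶜ) :
    𝔼 f, g f * h f = (𝔼 f, g f) * 𝔼 f, h f := by
  rw [← expect_expect_piecewise C, mul_comm, expect_mul]
  refine expect_congr rfl fun f _ => ?_
  rw [mul_expect]
  refine expect_congr rfl fun x _ => ?_
  rw [hg fun v hv => piecewise_eq_of_mem C x f hv,
    hh fun v hv => piecewise_eq_of_notMem C x f hv, mul_comm]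

lemma expect_prod_apply [Semifield K] [CharZero K] (C : Finset ι) (g : ι → α → K) :
    𝔼 f : ι → α, ∏ v ∈ C, g v (f v) = ∏ v ∈ C, 𝔼 a, g v a := by
  let g' (v : ι) (a : α) : K := if v ∈ C then g v a else 1
  have h_univ : 𝔼 f : ι → α, ∏ v, g' v (f v) = ∏ v, 𝔼 a, g' v a := by
    simp only [Fintype.expect_eq_sum_div_card, prod_div_distrib, prod_univ_sum,
      Fintype.piFinset_univ, prod_const, card_univ, Fintype.card_fun, Nat.cast_pow]
  calc 𝔼 f : ι → α, ∏ v ∈ C, g v (f v) = 𝔼 f : ι → α, ∏ v, g' v (f v) := by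
        simp only [g', prod_ite_mem, univ_inter]
    _ = ∏ v, 𝔼 a, g' v a := h_univ
    _ = ∏ v, if v ∈ C then 𝔼 a, g v a else 1 := by
        refine prod_congr rfl fun v _ => ?_
        by_cases hv : v ∈ C <;> simp [g', hv]
    _ = ∏ v ∈ C, 𝔼 a, g v a := by rw [prod_ite_mem, univ_inter]

end Expectation

lemma expect_pow_le_expect_pow {ι : Type*} {s : Finset ι} (hs : s.Nonempty) {f : ι → ℝ}
    (hf : ∀ i ∈ s, 0 ≤ f i) (n : ℕ) : (𝔼 i ∈ s, f i) ^ n ≤ 𝔼 i ∈ s, f i ^ n := by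
  have hs' : (#s : ℝ) ≠ 0 := by exact_mod_cast hs.card_ne_zero
  have h := Real.pow_arith_mean_le_arith_mean_pow s (fun _ => (#s : ℝ)⁻¹) f
    (fun _ _ => by positivity) (by simp [hs']) hf n
  simpa only [← mul_sum, expect_eq_sum_div_card, div_eq_inv_mul] using h

lemma prod_mul_one_sub_sum_ite_lt_le_prod {ι K : Type*} [CommRing K] [LinearOrder K]
    [IsStrictOrderedRing K] (s : Finset ι) {L X : ι → K}
    (hL : ∀ i ∈ s, 0 ≤ L i) (hX : ∀ i ∈ s, 0 ≤ X i) :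
    (∏ i ∈ s, L i) * (1 - ∑ i ∈ s, if X i < L i then 1 else 0) ≤ ∏ i ∈ s, X i := by
  by_cases h : ∃ i ∈ s, X i < L i
  · obtain ⟨i, hi, hlt⟩ := h
    have one_le_sum : (1 : K) ≤ ∑ i ∈ s, if X i < L i then 1 else 0 := by
      simpa [hlt] using single_le_sum (f := fun i => if X i < L i then (1 : K) else 0)
        (fun j _ => by positivity) hi
    exact (mul_nonpos_of_nonneg_of_nonpos (prod_nonneg hL) (by linarith)).trans (prod_nonneg hX)
  · push Not at h
    rw [sum_eq_zero fun i hi => if_neg (h i hi).not_gt, sub_zero, mul_one]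
    exact prod_le_prod hL h

lemma pow_mul_div_pow_le_div_pow {K : Type*} [Field K] [LinearOrder K] [IsStrictOrderedRing K]
    {a b D : K} {r t : ℕ} (ha : 0 < a) (ha' : a ≤ 1) (hab : a ≤ b) (hD : 0 ≤ D)
    (hrt : r ≤ t) : b ^ r * (D / b ^ t) ≤ D / a ^ t := by
  have hb : 0 < b := ha.trans_le hab
  have h_pow : a ^ t ≤ b ^ (t - r) :=
    (pow_le_pow_of_le_one ha.le ha' (Nat.sub_le t r)).trans (pow_le_pow_left₀ ha.le hab _)
  calc b ^ r * (D / b ^ t) = D / b ^ (t - r) := by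
        rw [pow_sub₀ _ hb.ne' hrt]
        field_simp
    _ ≤ D / a ^ t := div_le_div_of_nonneg_left hD (pow_pos ha t) h_pow

section JoinWeight

variable {V W : Type*}

/-- The weight of the complete bipartite graph between `S`, mapped by `f`, and `T`, mapped
by `x`. -/
def joinWeight (A : Sym2 W → ℝ) (S T : Finset V) (f x : V → W) : ℝ :=
  ∏ u ∈ S, ∏ v ∈ T, A s(f u, x v)

variable {A : Sym2 W → ℝ} {S T : Finset V} {f f' x x' : V → W}

lemma joinWeight_comm : joinWeight A S T f x = joinWeight A T S x f := by
  simp only [joinWeight]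
  rw [prod_comm]
  simp only [Sym2.eq_swap]

lemma joinWeight_congr (hf : ∀ u ∈ S, f u = f' u) (hx : ∀ v ∈ T, x v = x' v) :
    joinWeight A S T f x = joinWeight A S T f' x' :=
  prod_congr rfl fun u hu => prod_congr rfl fun v hv => by rw [hf u hu, hx v hv]

lemma dependsOn_joinWeight : DependsOn (joinWeight A S T f) T :=
  fun _ _ h => joinWeight_congr (fun _ _ => rfl) h

lemma joinWeight_sdiff_mul [DecidableEq V] {U : Finset V} (hU : U ⊆ T) :
    joinWeight A S (T \ U) f x * joinWeight A S U f x = joinWeight A S T f x := by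
  simp only [joinWeight, ← prod_mul_distrib, prod_sdiff hU]

lemma joinWeight_nonneg (hA : ∀ e, 0 ≤ A e) : 0 ≤ joinWeight A S T f x :=
  prod_nonneg fun _ _ => prod_nonneg fun _ _ => hA _

end JoinWeight

section Weights

variable {V W : Type*} [Fintype W]

/-- The homomorphism density `t_H(A) = 𝔼_f ∏_{uv ∈ E(H)} A(f u, f v)` into a weighted graph.
Weights live on `Sym2 W`, so that symmetry is built in; loops may have nonzero weight. -/
noncomputable def weightedHomDensity [Fintype V] [DecidableEq V] (H : SimpleGraph V)
    [Fintype H.edgeSet] (A : Sym2 W → ℝ) : ℝ :=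
  𝔼 f : V → W, ∏ e ∈ H.edgeFinset, A (e.map f)

/-- The degree `𝔼_u A(u, w)` of a vertex of a weighted graph, normalized by the number of
vertices. -/
noncomputable def weightedDegree (A : Sym2 W → ℝ) (w : W) : ℝ :=
  𝔼 u, A s(u, w)

/-- The `r`-norm density `p_r(A) = (𝔼_w d(w)^r)^{1/r}` of a weighted graph. -/
noncomputable def weightedNormDensity (A : Sym2 W → ℝ) (r : ℕ) : ℝ :=
  (𝔼 w, weightedDegree A w ^ r) ^ (r : ℝ)⁻¹

/-- The edge density `t_{K₂}(A) = 𝔼_w d(w)` of a weighted graph. -/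
noncomputable def weightedEdgeDensity (A : Sym2 W → ℝ) : ℝ :=
  𝔼 w, weightedDegree A w

/-- The normalized codegree `𝔼_w ∏_{u ∈ S} A(f u, w)` of the tuple `f(S)`: in a graph, the
density of its common neighbourhood. -/
noncomputable def codegree (A : Sym2 W → ℝ) (S : Finset V) (f : V → W) : ℝ :=
  𝔼 w, ∏ u ∈ S, A s(f u, w)

variable {A : Sym2 W → ℝ} {S T : Finset V} {f : V → W}

lemma codegree_nonneg (hA : ∀ e, 0 ≤ A e) : 0 ≤ codegree A S f :=
  expect_nonneg fun _ _ => prod_nonneg fun _ _ => hA _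

lemma weightedHomDensity_nonneg [Fintype V] [DecidableEq V] {H : SimpleGraph V}
    [Fintype H.edgeSet] (hA : ∀ e, 0 ≤ A e) : 0 ≤ weightedHomDensity H A :=
  expect_nonneg fun _ _ => prod_nonneg fun _ _ => hA _

lemma weightedHomDensity_smul [Fintype V] [DecidableEq V] {H : SimpleGraph V}
    [Fintype H.edgeSet] (p : ℝ) :
    weightedHomDensity H (p • A) = p ^ #H.edgeFinset * weightedHomDensity H A := by
  simp only [weightedHomDensity, Pi.smul_apply, smul_eq_mul, prod_mul_distrib, prod_const,
    mul_expect]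

lemma weightedDegree_smul (p : ℝ) (w : W) :
    weightedDegree (p • A) w = p * weightedDegree A w := by
  simp only [weightedDegree, Pi.smul_apply, smul_eq_mul, mul_expect]

lemma weightedDegree_nonneg (hA : ∀ e, 0 ≤ A e) (w : W) : 0 ≤ weightedDegree A w :=
  expect_nonneg fun _ _ => hA _

lemma weightedNormDensity_nonneg (hA : ∀ e, 0 ≤ A e) (r : ℕ) : 0 ≤ weightedNormDensity A r :=
  Real.rpow_nonneg (expect_nonneg fun w _ => pow_nonneg (weightedDegree_nonneg hA w) r) _

lemma weightedNormDensity_pow (hA : ∀ e, 0 ≤ A e) {r : ℕ} (hr : r ≠ 0) :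
    weightedNormDensity A r ^ r = 𝔼 w, weightedDegree A w ^ r :=
  Real.rpow_inv_natCast_pow
    (expect_nonneg fun w _ => pow_nonneg (weightedDegree_nonneg hA w) r) hr

lemma weightedEdgeDensity_nonneg (hA : ∀ e, 0 ≤ A e) : 0 ≤ weightedEdgeDensity A :=
  expect_nonneg fun w _ => weightedDegree_nonneg hA w

variable [Nonempty W]

lemma weightedEdgeDensity_le_weightedNormDensity (hA : ∀ e, 0 ≤ A e) {r : ℕ} (hr : r ≠ 0) :
    weightedEdgeDensity A ≤ weightedNormDensity A r := by
  rw [← pow_le_pow_iff_left₀ (weightedEdgeDensity_nonneg hA) (weightedNormDensity_nonneg hA r) hr,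
    weightedNormDensity_pow hA hr]
  exact expect_pow_le_expect_pow univ_nonempty (fun w _ => weightedDegree_nonneg hA w) r

variable [Fintype V] [DecidableEq V]

lemma expect_joinWeight : 𝔼 x, joinWeight A S T f x = codegree A S f ^ #T := by
  simp only [joinWeight]
  simp_rw [prod_comm (s := S)]
  rw [expect_prod_apply T fun _ w => ∏ u ∈ S, A s(f u, w), prod_const, codegree]

lemma expect_codegree : 𝔼 f, codegree A S f = 𝔼 w, weightedDegree A w ^ #S := by
  simp only [codegree]
  rw [expect_comm]
  refine expect_congr rfl fun w _ => ?_
  rw [expect_prod_apply S fun _ u => A s(u, w), prod_const, weightedDegree]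

lemma expect_joinWeight_mul {U : Finset V} (hU : U ⊆ T) {h : (V → W) → ℝ} (hh : DependsOn h U) :
    𝔼 x, joinWeight A S T f x * h x
      = codegree A S f ^ (#T - #U) * 𝔼 x, joinWeight A S U f x * h x := by
  have h_depends : DependsOn (fun x => joinWeight A S U f x * h x) (↑(T \ U))ᶜ := by
    intro x y hxy
    have hxyU : ∀ v ∈ U, x v = y v := fun v hv => hxy v (by simp [hv])
    exact congrArg₂ _ (dependsOn_joinWeight hxyU) (hh hxyU)
  rw [← card_sdiff_of_subset hU, ← expect_joinWeight,
    ← expect_mul_of_dependsOn dependsOn_joinWeight h_depends]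
  simp only [← mul_assoc, joinWeight_sdiff_mul hU]

end Weights

section SimpleGraph

variable {V W : Type} [Fintype W] (G : SimpleGraph W)

lemma homDensity_eq_weightedHomDensity [Fintype V] [DecidableEq V] (H : SimpleGraph V)
    [Fintype H.edgeSet] : homDensity H G = weightedHomDensity H (G.edgeSet.indicator 1) := by
  classical
  let homEquiv : {f : V → W // ∀ e ∈ H.edgeFinset, e.map f ∈ G.edgeSet} ≃ (H →g G) :=
    { toFun := fun f => ⟨f.1, fun {u v} huv => f.2 s(u, v) (by simpa using huv)⟩
      invFun := fun φ => ⟨φ, Sym2.ind fun u v huv => φ.map_rel (by simpa using huv)⟩ }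
  rw [homDensity, weightedHomDensity, Fintype.expect_eq_sum_div_card, ← Nat.card_congr homEquiv,
    Nat.card_eq_fintype_card, Fintype.card_subtype, Fintype.card_fun, Nat.cast_pow]
  simp only [Set.indicator_apply, Pi.one_apply, prod_ite_zero, prod_const_one, sum_boole]

lemma weightedDegree_indicator_edgeSet [DecidableRel G.Adj] (w : W) :
    weightedDegree (G.edgeSet.indicator 1) w = G.degree w / Fintype.card W := by
  classical
  rw [weightedDegree, Fintype.expect_eq_sum_div_card, ← G.card_neighborFinset_eq_degree,
    G.neighborFinset_eq_filter]
  simp only [Set.indicator_apply, SimpleGraph.mem_edgeSet, Pi.one_apply, sum_boole, G.adj_comm]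

lemma rnormDensity_eq_weightedNormDensity [DecidableRel G.Adj] (r : ℕ) :
    rnormDensity G r = weightedNormDensity (G.edgeSet.indicator 1) r := by
  simp only [rnormDensity, weightedNormDensity, weightedDegree_indicator_edgeSet,
    Fintype.expect_eq_sum_div_card, div_pow, ← sum_div, div_div, pow_succ]

lemma edgeDensity'_eq_weightedEdgeDensity :
    edgeDensity' G = weightedEdgeDensity (G.edgeSet.indicator 1) := by
  classical
  have sum_degree : ∑ w, (G.degree w : ℝ) = 2 * Nat.card G.edgeSet := by
    rw [Nat.card_eq_fintype_card, ← SimpleGraph.edgeFinset_card]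
    exact_mod_cast G.sum_degrees_eq_twice_card_edges
  simp only [edgeDensity', weightedEdgeDensity, weightedDegree_indicator_edgeSet,
    Fintype.expect_eq_sum_div_card, ← sum_div, div_div, ← sq, sum_degree]

end SimpleGraph

namespace BlockRep

variable {V : Type} [Fintype V] [DecidableEq V] {H : SimpleGraph V} {m : ℕ} (R : BlockRep H m)

section Tree

/-- The parent of a block in the tree of blocks: the block containing `P i`. This is `γ i` for
`i ≥ 2`, and `B₀` for `i = 1`; the value at the root is irrelevant. -/
def parent (i : Fin (m + 1)) : Fin (m + 1) :=
  if 2 ≤ (i : ℕ) then R.γ i else 0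

/-- The children of a block in the tree of blocks. -/
def children (i : Fin (m + 1)) : Finset (Fin (m + 1)) :=
  {k | k ≠ 0 ∧ R.parent k = i}

lemma val_one (R : BlockRep H m) : ((1 : Fin (m + 1)) : ℕ) = 1 := by
  rw [Fin.val_one', Nat.mod_eq_of_lt (Nat.lt_succ_of_le R.hm)]

protected lemma one_ne_zero (R : BlockRep H m) : (1 : Fin (m + 1)) ≠ 0 := by
  rw [Ne, Fin.ext_iff, R.val_one, Fin.val_zero]
  exact Nat.one_ne_zero

lemma eq_one_or_two_le (R : BlockRep H m) {i : Fin (m + 1)} (hi : i ≠ 0) :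
    i = 1 ∨ 2 ≤ (i : ℕ) := by
  rw [Ne, Fin.ext_iff, Fin.val_zero] at hi
  rw [Fin.ext_iff, R.val_one]
  omega

variable {i k : Fin (m + 1)}

lemma parent_one : R.parent 1 = 0 := by
  rw [parent, R.val_one, if_neg (by norm_num)]

lemma parent_of_two_le (hi : 2 ≤ (i : ℕ)) : R.parent i = R.γ i :=
  if_pos hi

lemma parent_eq_zero_iff (hi : i ≠ 0) : R.parent i = 0 ↔ i = 1 := by
  refine ⟨fun h => (R.eq_one_or_two_le hi).resolve_right fun hi2 => ?_,
    fun h => h ▸ R.parent_one⟩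
  have one_le_parent := (R.γ_lt i hi2).1
  rw [← R.parent_of_two_le hi2, h, Fin.val_zero] at one_le_parent
  omega

lemma parent_lt (hi : i ≠ 0) : R.parent i < i := by
  rcases R.eq_one_or_two_le hi with rfl | hi2
  · rw [parent_one]
    exact Fin.pos_of_ne_zero hi
  · rw [R.parent_of_two_le hi2]
    exact (R.γ_lt i hi2).2

lemma P_subset_B_parent (hi : i ≠ 0) : R.P i ⊆ R.B (R.parent i) := by
  rcases R.eq_one_or_two_le hi with rfl | hi2
  · rw [parent_one, R.P_one]
  · rw [R.parent_of_two_le hi2]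
    exact R.P_subset i hi2

lemma card_P_parent_le (hi : R.parent i ≠ 0) : #(R.P (R.parent i)) ≤ #(R.P i) := by
  have hi2 : 2 ≤ (i : ℕ) := by_contra fun h => hi (if_neg h)
  rw [R.parent_of_two_le hi2]
  exact R.P_card_mono i hi2

lemma P_nonempty (hi : i ≠ 0) : (R.P i).Nonempty := by
  induction i using WellFoundedLT.induction with
  | ind i ih =>
    by_cases hparent : R.parent i = 0
    · rw [(R.parent_eq_zero_iff hi).1 hparent, R.P_one]
      exact R.B_nonempty 0
    · exact card_pos.1 <| (card_pos.2 (ih _ (R.parent_lt hi) hparent)).trans_le <|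
        R.card_P_parent_le hparent

variable {R}

lemma mem_children : k ∈ R.children i ↔ k ≠ 0 ∧ R.parent k = i := by
  simp [children]

lemma lt_of_mem_children (hk : k ∈ R.children i) : i < k :=
  (mem_children.1 hk).2 ▸ R.parent_lt (mem_children.1 hk).1

lemma P_subset_B_of_mem_children (hk : k ∈ R.children i) : R.P k ⊆ R.B i :=
  (mem_children.1 hk).2 ▸ R.P_subset_B_parent (mem_children.1 hk).1

lemma card_P_le_of_mem_children (hi : i ≠ 0) (hk : k ∈ R.children i) :
    #(R.P i) ≤ #(R.P k) := by
  obtain ⟨-, rfl⟩ := mem_children.1 hk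
  exact R.card_P_parent_le hi

lemma eq_of_mem_B {v : V} (hi : v ∈ R.B i) (hk : v ∈ R.B k) : i = k :=
  (R.partition v).unique hi hk

end Tree

lemma adj_iff_exists_ne_zero {u v : V} : H.Adj u v ↔
    ∃ i ≠ 0, (u ∈ R.P i ∧ v ∈ R.B i) ∨ v ∈ R.P i ∧ u ∈ R.B i := by
  simp only [R.adj_iff, Nat.one_le_iff_ne_zero, ne_eq, Fin.val_eq_zero_iff]

lemma prod_edgeFinset {M : Type*} [CommMonoid M] [Fintype H.edgeSet] (g : Sym2 V → M) :
    ∏ e ∈ H.edgeFinset, g e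
      = ∏ i : Fin (m + 1) with i ≠ 0, ∏ u ∈ R.P i, ∏ v ∈ R.B i, g s(u, v) := by
  simp_rw [← prod_product', prod_sigma']
  refine (prod_nbij (fun q : (_ : Fin (m + 1)) × V × V => s(q.2.1, q.2.2))
    ?_ ?_ ?_ fun _ _ => rfl).symm
  · rintro ⟨i, u, v⟩ hq
    simp only [mem_sigma, mem_filter_univ, mem_product] at hq
    rw [SimpleGraph.mem_edgeFinset, SimpleGraph.mem_edgeSet, R.adj_iff_exists_ne_zero]
    exact ⟨i, hq.1, Or.inl hq.2⟩
  · rintro ⟨i, u, v⟩ hq ⟨k, u', v'⟩ hq' heq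
    simp only [mem_coe, mem_sigma, mem_filter_univ, mem_product] at hq hq'
    obtain ⟨hi, hu, hv⟩ := hq
    obtain ⟨hk, hu', hv'⟩ := hq'
    rcases Sym2.eq_iff.1 heq with ⟨rfl, rfl⟩ | ⟨rfl, rfl⟩
    · obtain rfl := eq_of_mem_B hv hv'
      rfl
    · have parent_i : R.parent i = k := eq_of_mem_B (R.P_subset_B_parent hi hu) hv'
      have parent_k : R.parent k = i := eq_of_mem_B (R.P_subset_B_parent hk hu') hv
      exact absurd (parent_i ▸ R.parent_lt hi) (parent_k ▸ R.parent_lt hk).asymm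
  · refine Sym2.ind fun u v huv => ?_
    rw [mem_coe, SimpleGraph.mem_edgeFinset, SimpleGraph.mem_edgeSet,
      R.adj_iff_exists_ne_zero] at huv
    obtain ⟨i, hi, ⟨hu, hv⟩ | ⟨hv, hu⟩⟩ := huv
    · exact ⟨⟨i, u, v⟩, by simp [hi, hu, hv], rfl⟩
    · exact ⟨⟨i, v, u⟩, by simp [hi, hu, hv], Sym2.eq_swap⟩

section ExtDensity

variable {W : Type*} [Fintype W] (A : Sym2 W → ℝ)

/-- The weighted density of the extensions of the placement `f` of `P i` to `B i` and to all
blocks below it. The average is over all maps `x : V → W`, although only their values on `B i`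
matter. -/
noncomputable def extDensity (i : Fin (m + 1)) (f : V → W) : ℝ :=
  𝔼 x, joinWeight A (R.P i) (R.B i) f x * ∏ k ∈ (R.children i).attach, extDensity k x
termination_by m + 1 - (i : ℕ)
decreasing_by
  have := lt_of_mem_children k.2
  omega

variable {A}

lemma extDensity_eq_expect (i : Fin (m + 1)) (f : V → W) :
    R.extDensity A i f =
      𝔼 x, joinWeight A (R.P i) (R.B i) f x * ∏ k ∈ R.children i, R.extDensity A k x := by
  rw [extDensity]
  exact expect_congr rfl fun x _ => by rw [prod_attach _ fun k => R.extDensity A k x]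

lemma dependsOn_extDensity (i : Fin (m + 1)) : DependsOn (R.extDensity A i) (R.P i) := by
  intro f g hfg
  simp only [R.extDensity_eq_expect i, joinWeight_congr hfg fun _ _ => rfl]

lemma extDensity_nonneg (hA : ∀ e, 0 ≤ A e) (i : Fin (m + 1)) (f : V → W) :
    0 ≤ R.extDensity A i f := by
  induction i using WellFoundedGT.induction generalizing f with
  | ind i ih =>
    rw [extDensity_eq_expect]
    exact expect_nonneg fun x _ => mul_nonneg (joinWeight_nonneg hA)
      (prod_nonneg fun k hk => ih k (lt_of_mem_children hk) x)

end ExtDensity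

section Exploration

/-- The non-root blocks among the first `j` blocks: those placed in the exploration of `H` before
step `j`. -/
def placed (m j : ℕ) : Finset (Fin (m + 1)) :=
  {i | i ≠ 0 ∧ (i : ℕ) < j}

/-- The blocks that are not among the first `j` blocks, but whose parents are. -/
def frontier (j : ℕ) : Finset (Fin (m + 1)) :=
  {k | j ≤ (k : ℕ) ∧ (R.parent k : ℕ) < j}

variable {R} {i k : Fin (m + 1)} {j : ℕ}

lemma mem_placed : i ∈ placed m j ↔ i ≠ 0 ∧ (i : ℕ) < j := by
  simp [placed]

lemma mem_frontier : k ∈ R.frontier j ↔ j ≤ (k : ℕ) ∧ (R.parent k : ℕ) < j := by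
  simp [frontier]

lemma placed_one : placed m 1 = ∅ := by
  ext i
  simp [mem_placed]

variable (R) in
lemma frontier_one : R.frontier 1 = {1} := by
  ext k
  rw [mem_frontier, mem_singleton, Nat.one_le_iff_ne_zero, Nat.lt_one_iff, Fin.val_eq_zero_iff,
    Ne, Fin.val_eq_zero_iff]
  exact ⟨fun h => (R.parent_eq_zero_iff h.1).1 h.2, fun h => h ▸ ⟨R.one_ne_zero, R.parent_one⟩⟩

lemma placed_last : placed m (m + 1) = ({i | i ≠ 0} : Finset (Fin (m + 1))) := by
  ext i
  simp [mem_placed, i.is_le]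

variable (R) in
lemma frontier_last : R.frontier (m + 1) = ∅ :=
  eq_empty_of_forall_notMem fun k hk => (mem_frontier.1 hk).1.not_gt k.isLt

lemma placed_val_add_one (hi : i ≠ 0) : placed m (i + 1) = insert i (placed m i) := by
  ext j
  simp only [mem_placed, mem_insert]
  grind

lemma mem_frontier_val (hi : i ≠ 0) : i ∈ R.frontier i :=
  mem_frontier.2 ⟨le_rfl, R.parent_lt hi⟩

lemma frontier_val_add_one : R.frontier (i + 1) = (R.frontier i).erase i ∪ R.children i := by
  ext k
  have := R.parent_lt (i := k)
  simp only [mem_frontier, mem_union, mem_erase, mem_children]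
  grind

lemma disjoint_frontier_children : Disjoint ((R.frontier i).erase i) (R.children i) :=
  disjoint_left.2 fun _ hk hk' =>
    (mem_frontier.1 (mem_of_mem_erase hk)).2.ne (congrArg Fin.val (mem_children.1 hk').2)

variable (R) {W : Type*} [Fintype W] (A : Sym2 W → ℝ)

/-- The state of the exploration of `H` after the first `j` blocks (including `B₀`) have been
placed by `f`: the edges inside these blocks are counted with their weights, and each block on the
frontier contributes the density of the extensions to it and its descendants. -/
noncomputable def explorationWeight (j : ℕ) (f : V → W) : ℝ :=
  (∏ i ∈ placed m j, joinWeight A (R.P i) (R.B i) f f) * ∏ k ∈ R.frontier j, R.extDensity A k f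

/-- The factors of `explorationWeight A i f` that the placement of the block `B i` leaves
unchanged. -/
noncomputable def unaffectedWeight (i : Fin (m + 1)) (f : V → W) : ℝ :=
  (∏ j ∈ placed m i, joinWeight A (R.P j) (R.B j) f f) *
    ∏ k ∈ (R.frontier i).erase i, R.extDensity A k f

variable {A}

lemma explorationWeight_one (f : V → W) : R.explorationWeight A 1 f = R.extDensity A 1 f := by
  rw [explorationWeight, placed_one, frontier_one, prod_empty, prod_singleton, one_mul]

lemma explorationWeight_last (f : V → W) : R.explorationWeight A (m + 1) f
    = ∏ i : Fin (m + 1) with i ≠ 0, joinWeight A (R.P i) (R.B i) f f := by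
  rw [explorationWeight, placed_last, frontier_last, prod_empty, mul_one]

lemma explorationWeight_val (hi : i ≠ 0) (f : V → W) :
    R.explorationWeight A i f = R.unaffectedWeight A i f * R.extDensity A i f := by
  rw [explorationWeight, unaffectedWeight, mul_assoc, prod_erase_mul _ _ (mem_frontier_val hi)]

lemma explorationWeight_val_add_one (hi : i ≠ 0) (f : V → W) :
    R.explorationWeight A (i + 1) f = R.unaffectedWeight A i f *
      (joinWeight A (R.P i) (R.B i) f f * ∏ k ∈ R.children i, R.extDensity A k f) := by
  rw [explorationWeight, placed_val_add_one hi, prod_insert (by simp [mem_placed]),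
    frontier_val_add_one, prod_union disjoint_frontier_children, unaffectedWeight]
  ring

lemma dependsOn_unaffectedWeight (i : Fin (m + 1)) :
    DependsOn (R.unaffectedWeight A i) (↑(R.B i))ᶜ := by
  intro f g hfg
  have agree_B {j : Fin (m + 1)} (hj : j ≠ i) : ∀ v ∈ R.B j, f v = g v :=
    fun v hv => hfg v fun hv' => hj (eq_of_mem_B hv hv')
  have agree_P {j : Fin (m + 1)} (hj : j ≠ 0) (hji : R.parent j < i) : ∀ v ∈ R.P j, f v = g v :=
    fun v hv => agree_B hji.ne v (R.P_subset_B_parent hj hv)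
  refine congrArg₂ (· * ·) (prod_congr rfl fun j hj => ?_) (prod_congr rfl fun k hk => ?_)
  · obtain ⟨hj0, hji : j < i⟩ := mem_placed.1 hj
    exact joinWeight_congr (agree_P hj0 ((R.parent_lt hj0).trans hji)) (agree_B hji.ne)
  · obtain ⟨hki, hk⟩ := mem_erase.1 hk
    obtain ⟨hik : i ≤ k, hpk : R.parent k < i⟩ := mem_frontier.1 hk
    exact R.dependsOn_extDensity k (agree_P (Fin.ne_zero_of_lt (hik.lt_of_ne' hki)) hpk)

variable [Nonempty W]

lemma expect_explorationWeight_val_add_one (hi : i ≠ 0) :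
    𝔼 f, R.explorationWeight A (i + 1) f = 𝔼 f, R.explorationWeight A i f := by
  rw [← expect_expect_piecewise (R.B i)]
  refine expect_congr rfl fun f _ => ?_
  rw [R.explorationWeight_val hi, extDensity_eq_expect, mul_expect]
  refine expect_congr rfl fun x _ => ?_
  have agree_x : ∀ v ∈ R.B i, (R.B i).piecewise x f v = x v :=
    fun v hv => piecewise_eq_of_mem _ _ _ hv
  have agree_f : ∀ v ∉ R.B i, (R.B i).piecewise x f v = f v :=
    fun v hv => piecewise_eq_of_notMem _ _ _ hv
  have agree_P : ∀ v ∈ R.P i, (R.B i).piecewise x f v = f v := fun v hv =>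
    agree_f v fun hv' => (R.parent_lt hi).ne (eq_of_mem_B (R.P_subset_B_parent hi hv) hv')
  rw [R.explorationWeight_val_add_one hi, R.dependsOn_unaffectedWeight i agree_f,
    joinWeight_congr agree_P agree_x]
  congr 2
  exact prod_congr rfl fun k hk => R.dependsOn_extDensity k fun v hv =>
    agree_x v (P_subset_B_of_mem_children hk hv)

theorem expect_extDensity_one [Fintype H.edgeSet] :
    𝔼 f, R.extDensity A 1 f = weightedHomDensity H A := by
  have h_invariant (j : ℕ) (hj : j ≤ m) :
      𝔼 f, R.explorationWeight A (j + 1) f = 𝔼 f, R.explorationWeight A 1 f := by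
    induction j with
    | zero => rfl
    | succ j ih =>
      rw [← ih (by omega)]
      exact R.expect_explorationWeight_val_add_one (i := ⟨j + 1, by omega⟩) (by simp [Fin.ext_iff])
  have h := h_invariant m le_rfl
  simp only [explorationWeight_one, explorationWeight_last] at h
  rw [← h, weightedHomDensity]
  simp only [R.prod_edgeFinset, joinWeight, Sym2.map_mk]

end Exploration

section LowerBound

variable {W : Type*} [Fintype W] (A : Sym2 W → ℝ) (i k : Fin (m + 1)) (L : ℝ)

/-- The indicator of the placements of `P i` that are poor: those whose extensions to the blocks
below have density less than `L`. -/
noncomputable def poorIndicator (f : V → W) : ℝ :=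
  if R.extDensity A i f < L then 1 else 0

/-- The weighted density of the poor placements of `P k` that are joined to the placement `f` of
`P i`. -/
noncomputable def poorJoinDensity (f : V → W) : ℝ :=
  𝔼 x, joinWeight A (R.P i) (R.P k) f x * R.poorIndicator A k L x

variable {A i k L} {f : V → W} {r : ℕ} {ε : ℝ}

lemma poorIndicator_nonneg : 0 ≤ R.poorIndicator A i L f := by
  rw [poorIndicator]
  positivity

lemma poorIndicator_le_one : R.poorIndicator A i L f ≤ 1 := by
  rw [poorIndicator]
  split_ifs <;> norm_num

lemma poorIndicator_mono {L' : ℝ} (h : L ≤ L') :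
    R.poorIndicator A i L f ≤ R.poorIndicator A i L' f := by
  simp only [poorIndicator]
  split_ifs with h_lt h_lt'
  · rfl
  · exact absurd (h_lt.trans_le h) h_lt'
  · exact zero_le_one
  · rfl

lemma dependsOn_poorIndicator : DependsOn (R.poorIndicator A i L) (R.P i) := fun f g hfg => by
  simp only [poorIndicator, R.dependsOn_extDensity i hfg]

lemma codegree_pow_mul_poorIndicator_le_of_codegree_le (hA : ∀ e, 0 ≤ A e) (hr : 1 ≤ r)
    (hf : codegree A (R.P i) f ≤ ε) (hε : ε ≤ 1) :
    codegree A (R.P i) f ^ r * R.poorIndicator A i L f ≤ ε :=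
  calc _ ≤ codegree A (R.P i) f ^ r :=
        mul_le_of_le_one_right (pow_nonneg (codegree_nonneg hA) r) R.poorIndicator_le_one
    _ ≤ codegree A (R.P i) f :=
        pow_le_of_le_one (codegree_nonneg hA) (hf.trans hε) (Nat.one_le_iff_ne_zero.1 hr)
    _ ≤ ε := hf

lemma poorJoinDensity_nonneg (hA : ∀ e, 0 ≤ A e) : 0 ≤ R.poorJoinDensity A i k L f :=
  expect_nonneg fun _ _ => mul_nonneg (joinWeight_nonneg hA) R.poorIndicator_nonneg

variable [Nonempty W]

lemma expect_poorJoinDensity : 𝔼 f, R.poorJoinDensity A i k L f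
    = 𝔼 x, codegree A (R.P k) x ^ #(R.P i) * R.poorIndicator A k L x := by
  simp only [poorJoinDensity]
  rw [expect_comm]
  simp only [joinWeight_comm (S := R.P i), ← expect_mul, expect_joinWeight]

lemma mul_codegree_pow_sub_le_extDensity (hA : ∀ e, 0 ≤ A e) {L : Fin (m + 1) → ℝ}
    (hL : ∀ k ∈ R.children i, 0 ≤ L k) :
    (∏ k ∈ R.children i, L k) * (codegree A (R.P i) f ^ #(R.B i) -
      ∑ k ∈ R.children i,
        codegree A (R.P i) f ^ (#(R.B i) - #(R.P k)) * R.poorJoinDensity A i k (L k) f)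
      ≤ R.extDensity A i f := by
  have poor_children (k) (hk : k ∈ R.children i) :
      codegree A (R.P i) f ^ (#(R.B i) - #(R.P k)) * R.poorJoinDensity A i k (L k) f
        = 𝔼 x, joinWeight A (R.P i) (R.B i) f x * R.poorIndicator A k (L k) x :=
    (expect_joinWeight_mul (P_subset_B_of_mem_children hk) R.dependsOn_poorIndicator).symm
  rw [sum_congr rfl poor_children, ← expect_joinWeight, ← expect_sum_comm, ← expect_sub_distrib,
    mul_expect, extDensity_eq_expect]
  refine expect_le_expect fun x _ => ?_
  rw [← mul_sum, ← mul_one_sub, mul_left_comm]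
  exact mul_le_mul_of_nonneg_left (prod_mul_one_sub_sum_ite_lt_le_prod _ hL
    fun k _ => R.extDensity_nonneg hA k x) (joinWeight_nonneg hA)

lemma one_le_two_mul_sum_poorJoinDensity_div (hA : ∀ e, 0 ≤ A e) {L : Fin (m + 1) → ℝ}
    (hL : ∀ k ∈ R.children i, 0 ≤ L k) (hf : 0 < codegree A (R.P i) f)
    (h : R.extDensity A i f < (∏ k ∈ R.children i, L k) / 2 * codegree A (R.P i) f ^ #(R.B i)) :
    1 ≤ 2 * ∑ k ∈ R.children i,
      R.poorJoinDensity A i k (L k) f / codegree A (R.P i) f ^ #(R.P k) := by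
  have factor_out (k) (hk : k ∈ R.children i) :
      codegree A (R.P i) f ^ (#(R.B i) - #(R.P k)) * R.poorJoinDensity A i k (L k) f
        = codegree A (R.P i) f ^ #(R.B i) *
          (R.poorJoinDensity A i k (L k) f / codegree A (R.P i) f ^ #(R.P k)) := by
    rw [pow_sub₀ _ hf.ne' (card_le_card (P_subset_B_of_mem_children hk))]
    ring
  have h_lower := R.mul_codegree_pow_sub_le_extDensity (f := f) hA hL
  rw [sum_congr rfl factor_out, ← mul_sum, ← mul_one_sub, ← mul_assoc] at h_lower
  have h_prod : 0 ≤ (∏ k ∈ R.children i, L k) * codegree A (R.P i) f ^ #(R.B i) :=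
    mul_nonneg (prod_nonneg hL) (pow_nonneg hf.le _)
  by_contra! h_sum
  nlinarith

lemma codegree_pow_mul_poorIndicator_le (hA : ∀ e, 0 ≤ A e) (hi : i ≠ 0)
    {L : Fin (m + 1) → ℝ} (hL : ∀ k ∈ R.children i, 0 ≤ L k) (hr : 1 ≤ r) (hr' : r ≤ #(R.P i))
    (hε : 0 < ε) (hε' : ε ≤ 1) :
    codegree A (R.P i) f ^ r * R.poorIndicator A i
        ((∏ k ∈ R.children i, L k) / 2 * codegree A (R.P i) f ^ #(R.B i)) f
      ≤ ε + 2 * ∑ k ∈ R.children i, R.poorJoinDensity A i k (L k) f / ε ^ #(R.P k) := by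
  have h_nonneg : 0 ≤ ∑ k ∈ R.children i, R.poorJoinDensity A i k (L k) f / ε ^ #(R.P k) :=
    sum_nonneg fun k _ => div_nonneg (R.poorJoinDensity_nonneg hA) (by positivity)
  rcases le_or_gt (codegree A (R.P i) f) ε with h_small | h_large
  · exact (R.codegree_pow_mul_poorIndicator_le_of_codegree_le hA hr h_small hε').trans <|
      le_add_of_nonneg_right (by positivity)
  rw [poorIndicator]
  split_ifs with h_poor
  swap
  · rw [mul_zero]
    positivity
  have h_pos : 0 < codegree A (R.P i) f := hε.trans h_large
  calc codegree A (R.P i) f ^ r * 1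
      ≤ codegree A (R.P i) f ^ r * (2 * ∑ k ∈ R.children i,
          R.poorJoinDensity A i k (L k) f / codegree A (R.P i) f ^ #(R.P k)) := by
        gcongr
        exact R.one_le_two_mul_sum_poorJoinDensity_div hA hL h_pos h_poor
    _ ≤ 2 * ∑ k ∈ R.children i, R.poorJoinDensity A i k (L k) f / ε ^ #(R.P k) := by
        rw [mul_left_comm, mul_sum]
        gcongr with k hk
        exact pow_mul_div_pow_le_div_pow hε hε' h_large.le (R.poorJoinDensity_nonneg hA)
          (hr'.trans (card_P_le_of_mem_children hi hk))
    _ ≤ _ := le_add_of_nonneg_left hε.le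

lemma expect_codegree_pow_mul_poorIndicator_le (hA : ∀ e, 0 ≤ A e) (hi : i ≠ 0)
    {L : Fin (m + 1) → ℝ} (hL : ∀ k ∈ R.children i, 0 ≤ L k) (hr : 1 ≤ r) (hr' : r ≤ #(R.P i))
    (hε : 0 < ε) (hε' : ε ≤ 1) {δ : ℝ} (hδ : ∀ k ∈ R.children i,
      𝔼 x, codegree A (R.P k) x ^ #(R.P i) * R.poorIndicator A k (L k) x ≤ ε ^ #(R.P k) * δ) :
    𝔼 f, codegree A (R.P i) f ^ r * R.poorIndicator A i
        ((∏ k ∈ R.children i, L k) / 2 * codegree A (R.P i) f ^ #(R.B i)) f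
      ≤ ε + 2 * (#(R.children i) * δ) := by
  calc _ ≤ 𝔼 f, (ε + 2 * ∑ k ∈ R.children i,
          R.poorJoinDensity A i k (L k) f / ε ^ #(R.P k)) :=
        expect_le_expect fun f _ => R.codegree_pow_mul_poorIndicator_le hA hi hL hr hr' hε hε'
    _ = ε + 2 * ∑ k ∈ R.children i,
          (𝔼 f, R.poorJoinDensity A i k (L k) f) / ε ^ #(R.P k) := by
        rw [expect_add_distrib, Fintype.expect_const, ← mul_expect, expect_sum_comm]
        simp only [expect_div]
    _ ≤ ε + 2 * ∑ _k ∈ R.children i, δ := by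
        gcongr with k hk
        rw [expect_poorJoinDensity, div_le_iff₀' (by positivity)]
        exact hδ k hk
    _ = _ := by rw [sum_const, nsmul_eq_mul]

lemma expect_codegree_pow_mul_poorIndicator_le_add (hA : ∀ e, 0 ≤ A e) (hr : 1 ≤ r) {c : ℝ}
    (hc : 0 ≤ c) (hε : 0 ≤ ε) (hε' : ε ≤ 1) :
    𝔼 f, codegree A (R.P i) f ^ r * R.poorIndicator A i (c * ε ^ #(R.B i)) f
      ≤ 𝔼 f, codegree A (R.P i) f ^ r *
        R.poorIndicator A i (c * codegree A (R.P i) f ^ #(R.B i)) f + ε := by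
  suffices h : ∀ f, codegree A (R.P i) f ^ r * R.poorIndicator A i (c * ε ^ #(R.B i)) f
      ≤ codegree A (R.P i) f ^ r *
        R.poorIndicator A i (c * codegree A (R.P i) f ^ #(R.B i)) f + ε by
    simpa only [expect_add_distrib, Fintype.expect_const] using
      expect_le_expect (s := univ) fun f _ => h f
  intro f
  have h_pow_nonneg : 0 ≤ codegree A (R.P i) f ^ r := pow_nonneg (codegree_nonneg hA) r
  rcases le_or_gt (codegree A (R.P i) f) ε with h_small | h_large
  · exact (R.codegree_pow_mul_poorIndicator_le_of_codegree_le hA hr h_small hε').trans <|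
      le_add_of_nonneg_left (mul_nonneg h_pow_nonneg R.poorIndicator_nonneg)
  · refine le_add_of_le_of_nonneg (mul_le_mul_of_nonneg_left ?_ h_pow_nonneg) hε
    exact R.poorIndicator_mono (by gcongr)

end LowerBound

universe u

theorem exists_expect_codegree_pow_mul_poorIndicator_le {i : Fin (m + 1)} (hi : i ≠ 0) {δ : ℝ}
    (hδ : 0 < δ) : ∃ c : ℝ, 0 < c ∧ ∀ (W : Type u) [Fintype W] [Nonempty W] (A : Sym2 W → ℝ),
      (∀ e, 0 ≤ A e) → ∀ r, 1 ≤ r → r ≤ #(R.P i) → 𝔼 f, codegree A (R.P i) f ^ r *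
        R.poorIndicator A i (c * codegree A (R.P i) f ^ #(R.B i)) f ≤ δ := by
  induction i using WellFoundedGT.induction generalizing δ with
  | ind i ih =>
    obtain ⟨δ', hδ', h_card⟩ := exists_pos_mul_lt (show 0 < δ / 4 by positivity)
      (#(R.children i) : ℝ)
    let ε := min (δ / 2) 1
    have hε : 0 < ε := by positivity
    have exists_threshold (k) (hk : k ∈ R.children i) : ∃ L : ℝ, 0 < L ∧
        ∀ (W : Type u) [Fintype W] [Nonempty W] (A : Sym2 W → ℝ), (∀ e, 0 ≤ A e) →
        𝔼 x, codegree A (R.P k) x ^ #(R.P i) * R.poorIndicator A k L x ≤ ε ^ #(R.P k) * δ' := by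
      let η := ε ^ #(R.P k) * δ'
      have hη : 0 < η := by positivity
      obtain ⟨c, hc, h_rel⟩ := ih k (lt_of_mem_children hk) (mem_children.1 hk).1 (half_pos hη)
      refine ⟨c * min (η / 2) 1 ^ #(R.B k), by positivity, fun W _ _ A hA => ?_⟩
      have hPi : 1 ≤ #(R.P i) := card_pos.2 (R.P_nonempty hi)
      calc _ ≤ _ + min (η / 2) 1 := R.expect_codegree_pow_mul_poorIndicator_le_add hA hPi
            hc.le (by positivity) (min_le_right _ _)
        _ ≤ η / 2 + η / 2 := add_le_add
            (h_rel W A hA _ hPi (card_P_le_of_mem_children hi hk)) (min_le_left _ _)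
        _ = η := add_halves η
    choose! L hL h_poor using exists_threshold
    refine ⟨(∏ k ∈ R.children i, L k) / 2, half_pos (prod_pos hL),
      fun W _ _ A hA r hr hr' => ?_⟩
    have h := R.expect_codegree_pow_mul_poorIndicator_le hA hi (fun k hk => (hL k hk).le) hr hr'
      hε (min_le_right _ _) fun k hk => h_poor k hk W A hA
    linarith [min_le_left (δ / 2) 1]

theorem exists_le_weightedHomDensity [Fintype H.edgeSet] : ∃ c : ℝ, 0 < c ∧
    ∀ (W : Type u) [Fintype W] [Nonempty W] (A : Sym2 W → ℝ), (∀ e, 0 ≤ A e) →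
      𝔼 w, weightedDegree A w ^ #(R.B 0) = 1 → c ≤ weightedHomDensity H A := by
  obtain ⟨c, hc, h⟩ := R.exists_expect_codegree_pow_mul_poorIndicator_le R.one_ne_zero
    (half_pos one_pos)
  refine ⟨c * (1 / 2) ^ #(R.B 1), by positivity, fun W _ _ A hA h_norm => ?_⟩
  let poor (f : V → W) := R.poorIndicator A 1 (c * codegree A (R.P 1) f ^ #(R.B 1)) f
  have h_rich (f : V → W) : 0 ≤ codegree A (R.P 1) f * (1 - poor f) :=
    mul_nonneg (codegree_nonneg hA) (sub_nonneg.2 R.poorIndicator_le_one)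
  have half_le : 1 / 2 ≤ 𝔼 f, codegree A (R.P 1) f * (1 - poor f) := by
    have h_poor : 𝔼 f, codegree A (R.P 1) f * poor f ≤ 1 / 2 := by
      simpa only [pow_one] using h W A hA 1 le_rfl (card_pos.2 (R.P_nonempty R.one_ne_zero))
    have h_mean : 𝔼 f : V → W, codegree A (R.P 1) f = 1 := by
      rw [expect_codegree, R.P_one, h_norm]
    simp only [mul_one_sub, expect_sub_distrib, h_mean]
    linarith
  have h_ext (f : V → W) :
      c * (codegree A (R.P 1) f * (1 - poor f)) ^ #(R.B 1) ≤ R.extDensity A 1 f := by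
    simp only [poor, poorIndicator]
    split_ifs with h_poor
    · rw [sub_self, mul_zero, zero_pow (R.B_nonempty 1).card_ne_zero, mul_zero]
      exact R.extDensity_nonneg hA 1 f
    · simpa using h_poor
  calc c * (1 / 2) ^ #(R.B 1)
      ≤ c * (𝔼 f, codegree A (R.P 1) f * (1 - poor f)) ^ #(R.B 1) := by gcongr
    _ ≤ c * 𝔼 f, (codegree A (R.P 1) f * (1 - poor f)) ^ #(R.B 1) := by
        gcongr
        exact expect_pow_le_expect_pow univ_nonempty (fun f _ => h_rich f) _
    _ ≤ 𝔼 f, R.extDensity A 1 f := by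
        rw [mul_expect]
        exact expect_le_expect fun f _ => h_ext f
    _ = weightedHomDensity H A := R.expect_extDensity_one

lemma edgeFinset_nonempty (R : BlockRep H m) [Fintype H.edgeSet] : H.edgeFinset.Nonempty := by
  obtain ⟨u, hu⟩ := R.P_nonempty R.one_ne_zero
  obtain ⟨v, hv⟩ := R.B_nonempty 1
  exact ⟨s(u, v), SimpleGraph.mem_edgeFinset.2 <|
    R.adj_iff_exists_ne_zero.2 ⟨1, R.one_ne_zero, Or.inl ⟨hu, hv⟩⟩⟩

end BlockRep

theorem tree_degenerate_sidorenko_general.{u} {V : Type} [Fintype V] [DecidableEq V]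
    (H : SimpleGraph V) [Fintype H.edgeSet] (m : ℕ) (R : BlockRep H m) :
    ∃ c : ℝ, 0 < c ∧
      ∀ (W : Type u) [Fintype W] [Nonempty W] (A : Sym2 W → ℝ), (∀ e, 0 ≤ A e) →
        c * weightedNormDensity A #(R.B 0) ^ #H.edgeFinset ≤ weightedHomDensity H A ∧
        c * weightedEdgeDensity A ^ #H.edgeFinset
          ≤ c * weightedNormDensity A #(R.B 0) ^ #H.edgeFinset := by
  obtain ⟨c, hc, h⟩ := R.exists_le_weightedHomDensity
  refine ⟨c, hc, fun W _ _ A hA => ⟨?_, ?_⟩⟩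
  · rcases (weightedNormDensity_nonneg hA #(R.B 0)).eq_or_lt with h_zero | h_pos
    · rw [← h_zero, zero_pow R.edgeFinset_nonempty.card_ne_zero, mul_zero]
      exact weightedHomDensity_nonneg hA
    · set p := weightedNormDensity A #(R.B 0)
      have h_norm : 𝔼 w, weightedDegree (p⁻¹ • A) w ^ #(R.B 0) = 1 := by
        simp only [weightedDegree_smul, mul_pow, ← mul_expect]
        rw [← weightedNormDensity_pow hA (R.B_nonempty 0).card_ne_zero, ← mul_pow,
          inv_mul_cancel₀ h_pos.ne', one_pow]
      have h_normalized := h W (p⁻¹ • A) (fun e => mul_nonneg (by positivity) (hA e)) h_norm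
      rw [weightedHomDensity_smul, inv_pow, ← div_eq_inv_mul] at h_normalized
      exact (le_div_iff₀ (by positivity)).1 h_normalized
  · gcongr
    · exact weightedEdgeDensity_nonneg hA
    · exact weightedEdgeDensity_le_weightedNormDensity hA (R.B_nonempty 0).card_ne_zero

/-- **Theorem 1.8, first part.** If `H` is tree-degenerate with block representation
`(B₀, …, B_m, P)` and `s = |B₀|`, there is `c₁ = c₁(H) > 0` such that for every
graph `G`, `t_H(G) ≥ c₁ p_s(G)^{e(H)} ≥ c₁ t_{K₂}(G)^{e(H)}`. -/
theorem tree_degenerate_sidorenko {VH : Type} [Fintype VH] [DecidableEq VH]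
    (H : SimpleGraph VH) (m : ℕ) (R : BlockRep H m) :
    ∃ c₁ : ℝ, 0 < c₁ ∧
      ∀ (W : Type) [Fintype W] [Nonempty W] (G : SimpleGraph W) [DecidableRel G.Adj],
        c₁ * rnormDensity G ((R.B 0).card) ^ (Nat.card H.edgeSet) ≤ homDensity H G ∧
        c₁ * edgeDensity' G ^ (Nat.card H.edgeSet) ≤
          c₁ * rnormDensity G ((R.B 0).card) ^ (Nat.card H.edgeSet) := by
  classical
  obtain ⟨c, hc, h⟩ := tree_degenerate_sidorenko_general H m R
  refine ⟨c, hc, fun W _ _ G _ => ?_⟩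
  simpa only [homDensity_eq_weightedHomDensity, rnormDensity_eq_weightedNormDensity,
    edgeDensity'_eq_weightedEdgeDensity, Nat.card_eq_fintype_card, SimpleGraph.edgeFinset_card]
    using h W (G.edgeSet.indicator 1) (Set.indicator_nonneg fun _ _ => zero_le_one)
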